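/- Let 1 < p < ∞, 1 ≤ r ≤ 2, r ≤ t < ∞ with (r < 2 or t > r). There exists a constant C such that for every discrete Littlewood–Paley family (f_i)_{i∈ℤ} and every jump collection (N_k)_{k≥0}, one has ‖ (Σ_{k≥1} |Σ_{N_{k−1}(x) < i ≤ N_k(x)} f_i(x)|^t)^{1/t} ‖_{L^p(dx)} ≤ C ‖ (Σ_{i∈ℤ} |f_i|^r)^{1/r} ‖_{L^p(ℝ)}. (For t > r this is Lépingle's inequality; for t = r, r < 2, it is Pisier and Xu's inequality.) -/

import Mathlib

open MeasureTheory ENNReal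
open scoped NNReal

noncomputable section

/-- A jump collection: a sequence of measurable integer-valued functions on `ℝ`,
nondecreasing in the index. -/
def IsJumpCollection (Nk : ℕ → ℝ → ℤ) : Prop :=
  (∀ k, Measurable (Nk k)) ∧ ∀ (k : ℕ) (x : ℝ), Nk k x ≤ Nk (k + 1) x

/-- The dyadic interval `[m 2^(-i), (m+1) 2^(-i))`. -/
def dyadicInterval (i m : ℤ) : Set ℝ :=
  Set.Ico ((m : ℝ) * (2 : ℝ) ^ (-i)) (((m : ℝ) + 1) * (2 : ℝ) ^ (-i))

/-- A discrete Littlewood–Paley family: each `f i` is locally integrable, constant on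
every dyadic interval of length `2^(-i)`, and has integral zero over every dyadic
interval of length `2^(1-i)`. -/
def IsDiscLPFamily (f : ℤ → ℝ → ℝ) : Prop :=
  (∀ i, LocallyIntegrable (f i)) ∧
  (∀ i m : ℤ, ∀ x ∈ dyadicInterval i m, ∀ y ∈ dyadicInterval i m, f i x = f i y) ∧
  (∀ i m : ℤ, ∫ x in dyadicInterval (i - 1) m, f i x = 0)

/-!
The terms of a discrete Littlewood–Paley family are conditionally symmetric: exchanging the two
halves of every dyadic interval of length `2^(1-i)` changes the sign of `f i` and does not affect
the coarser terms. Fix a threshold `θ` and count greedily the jumps of size at least `2θ` of the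
partial sums. Along a conditionally symmetric sequence the potential `√(1 + (‖y‖ / θ)²) - 1`
increases on average by at most `min (‖f i‖ / θ) ((‖f i‖ / θ)²)`, while each reset of the counter
costs at least `1 / 4`, so the expected number of jumps is at most
`4 ∑ ∫ min (‖f i‖ / θ) ((‖f i‖ / θ)²)`.

Summing over the dyadic thresholds `θ ≍ 2⁻ʲ l` with weights `2^(-jt)` bounds the measure of the set
where the `t`-variation exceeds `l` by a multiple of `l⁻ʳ ∑ ∫ ‖f i‖ʳ`, provided that
`∑ⱼ 2^(-jt) min (2ʲ u) ((2ʲ u)²) ≲ uʳ`. This holds if `r < t`, and also if `1 < r = t < 2`; for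
`r = t = 1` the theorem is the triangle inequality. The weak-type bound is stable under martingale
transforms, so a good-`λ` argument extends it to all `L^p` with `0 < p < ∞`, and Fatou's lemma
passes from finite windows of indices to `ℤ`.
-/

section PathVariation

variable {ι κ E : Type*}

/-- The `t`-variation of a path `s` over the set of times `A`: the supremum of the numbers
`(∑ₖ edist (s (N (k + 1))) (s (N k)) ^ t) ^ (1 / t)` over nondecreasing sequences `N` in `A`.
For `t = 1` it is Mathlib's `eVariationOn`. -/
def powVariationOn [Preorder ι] [PseudoEMetricSpace E] (t : ℝ) (s : ι → E) (A : Set ι) : ℝ≥0∞ :=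
  ⨆ N : {N : ℕ → ι // Monotone N ∧ ∀ k, N k ∈ A},
    (∑' k, edist (s (N.1 (k + 1))) (s (N.1 k)) ^ t) ^ (1 / t)

theorem le_powVariationOn [Preorder ι] [PseudoEMetricSpace E] (t : ℝ) (s : ι → E) {A : Set ι}
    {N : ℕ → ι} (hN : Monotone N) (hA : ∀ k, N k ∈ A) :
    (∑' k, edist (s (N (k + 1))) (s (N k)) ^ t) ^ (1 / t) ≤ powVariationOn t s A :=
  le_iSup_of_le ⟨N, hN, hA⟩ le_rfl

theorem powVariationOn_comp_le [Preorder ι] [Preorder κ] [PseudoEMetricSpace E] (t : ℝ)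
    (s : κ → E) {φ : ι → κ} {A : Set ι} {B : Set κ} (hφ : Monotone φ) (hAB : Set.MapsTo φ A B) :
    powVariationOn t (s ∘ φ) A ≤ powVariationOn t s B :=
  iSup_le fun N => le_powVariationOn t s (hφ.comp N.2.1) fun k => hAB (N.2.2 k)

theorem powVariationOn_add_le [Preorder ι] [SeminormedAddCommGroup E] {t : ℝ} (ht : 1 ≤ t)
    (s s' : ι → E) (A : Set ι) :
    powVariationOn t (s + s') A ≤ powVariationOn t s A + powVariationOn t s' A := by
  refine iSup_le fun N => ?_
  set d : (ι → E) → ℕ → ℝ≥0∞ := fun u k => edist (u (N.1 (k + 1))) (u (N.1 k))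
  have minkowski : (∑' k, (d s + d s') k ^ t) ^ (1 / t)
      ≤ (∑' k, d s k ^ t) ^ (1 / t) + (∑' k, d s' k ^ t) ^ (1 / t) := by
    simpa only [lintegral_count] using ENNReal.lintegral_Lp_add_le (μ := Measure.count)
      (measurable_of_countable (d s)).aemeasurable (measurable_of_countable (d s')).aemeasurable ht
  calc (∑' k, d (s + s') k ^ t) ^ (1 / t)
    _ ≤ (∑' k, (d s + d s') k ^ t) ^ (1 / t) := by
      gcongr with k
      exact edist_add_add_le ..
    _ ≤ _ := minkowski
    _ ≤ powVariationOn t s A + powVariationOn t s' A :=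
      add_le_add (le_powVariationOn t s N.2.1 N.2.2) (le_powVariationOn t s' N.2.1 N.2.2)

theorem rpow_tsum_rpow_le_tsum {t : ℝ} (ht : 1 ≤ t) (u : κ → ℝ≥0∞) :
    (∑' k, u k ^ t) ^ (1 / t) ≤ ∑' k, u k := by
  have split (x : ℝ≥0∞) : x ^ t = x ^ (t - 1) * x := by
    simpa using ENNReal.rpow_add_of_nonneg (x := x) (t - 1) 1 (by linarith) zero_le_one
  rw [one_div, ENNReal.rpow_inv_le_iff (by linarith), split (∑' k, u k), ← ENNReal.tsum_mul_left]
  refine ENNReal.tsum_le_tsum fun k => ?_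
  rw [split]
  exact mul_le_mul_left (ENNReal.rpow_le_rpow (ENNReal.le_tsum k) (by linarith)) _

theorem powVariationOn_le_eVariationOn [LinearOrder ι] [PseudoEMetricSpace E] {t : ℝ}
    (ht : 1 ≤ t) (s : ι → E) (A : Set ι) : powVariationOn t s A ≤ eVariationOn s A :=
  iSup_le fun N => (rpow_tsum_rpow_le_tsum ht _).trans <|
    ENNReal.tsum_le_of_sum_range_le fun _ => eVariationOn.sum_le N.2.1 N.2.2

theorem eVariationOn_Iic_eq_sum_range [PseudoEMetricSpace E] (s : ℕ → E) (n : ℕ) :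
    eVariationOn s (Set.Iic n) = ∑ i ∈ Finset.range n, edist (s i) (s (i + 1)) := by
  have pair (i : ℕ) : Set.Icc i (i + 1) = {i, i + 1} := by
    ext j
    simp only [Set.mem_Icc, Set.mem_insert_iff, Set.mem_singleton_iff]
    omega
  rw [← Set.Icc_bot, Nat.bot_eq_zero]
  simpa [pair] using (eVariationOn.sum' s monotone_id (n := n)).symm

end PathVariation

section PartialSums

variable {E : Type*}

/-- The `t`-variation of the partial sums `0, a 0, a 0 + a 1, …` up to the sum of the first `n`
terms of the sequence `a`. -/
def partialSumVariation [NormedAddCommGroup E] (t : ℝ) (a : ℕ → E) (n : ℕ) : ℝ≥0∞ :=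
  powVariationOn t (fun m => ∑ i ∈ Finset.range m, a i) (Set.Iic n)

variable [NormedAddCommGroup E] {t : ℝ} {a b : ℕ → E} {n : ℕ}

theorem partialSumVariation_mono (t : ℝ) (a : ℕ → E) : Monotone (partialSumVariation t a) :=
  fun _ _ h => powVariationOn_comp_le t _ monotone_id fun _ hi => le_trans hi h

theorem partialSumVariation_add_le (ht : 1 ≤ t) (a b : ℕ → E) (n : ℕ) :
    partialSumVariation t (a + b) n ≤ partialSumVariation t a n + partialSumVariation t b n := by
  have sum_add : (fun m => ∑ i ∈ Finset.range m, (a + b) i)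
      = (fun m => ∑ i ∈ Finset.range m, a i) + fun m => ∑ i ∈ Finset.range m, b i :=
    funext fun _ => Finset.sum_add_distrib
  rw [partialSumVariation, sum_add]
  exact powVariationOn_add_le ht _ _ _

theorem partialSumVariation_le_sum_enorm (ht : 1 ≤ t) (a : ℕ → E) (n : ℕ) :
    partialSumVariation t a n ≤ ∑ i ∈ Finset.range n, ‖a i‖ₑ := by
  refine (powVariationOn_le_eVariationOn ht _ _).trans_eq ?_
  simp [eVariationOn_Iic_eq_sum_range, Finset.sum_range_succ, edist_eq_enorm_sub]

theorem partialSumVariation_single_le (ht : 1 ≤ t) (m : ℕ) (c : E) (n : ℕ) :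
    partialSumVariation t (Pi.single m c) n ≤ ‖c‖ₑ := by
  refine (partialSumVariation_le_sum_enorm ht _ n).trans ?_
  calc ∑ i ∈ Finset.range n, ‖(Pi.single m c : ℕ → E) i‖ₑ
    _ = ∑ i ∈ Finset.range n, if i = m then ‖c‖ₑ else 0 :=
      Finset.sum_congr rfl fun i _ => by rw [Pi.single_apply, apply_ite (‖·‖ₑ), enorm_zero]
    _ ≤ ‖c‖ₑ := by
      rw [Finset.sum_ite_eq']
      split_ifs <;> simp

theorem partialSumVariation_indicator_Iio_le (t : ℝ) (a : ℕ → E) (m n : ℕ) :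
    partialSumVariation t ((Set.Iio m).indicator a) n ≤ partialSumVariation t a m := by
  have stopped : (fun k => ∑ i ∈ Finset.range k, (Set.Iio m).indicator a i)
      = (fun k => ∑ i ∈ Finset.range k, a i) ∘ fun k => min k m := by
    ext k
    simp only [Function.comp, Set.indicator_apply, Set.mem_Iio, ← Finset.sum_filter]
    congr 1
    ext i
    simp
  rw [partialSumVariation, stopped]
  exact powVariationOn_comp_le t _ (monotone_id.min monotone_const) fun k _ => min_le_right k m

theorem partialSumVariation_zero (ht : 1 ≤ t) (a : ℕ → E) : partialSumVariation t a 0 = 0 := by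
  simpa using partialSumVariation_le_sum_enorm ht a 0

theorem partialSumVariation_congr (h : ∀ i < n, a i = b i) :
    partialSumVariation t a n = partialSumVariation t b n := by
  refine iSup_congr fun N => ?_
  have eq_at (k : ℕ) : ∑ i ∈ Finset.range (N.1 k), a i = ∑ i ∈ Finset.range (N.1 k), b i :=
    Finset.sum_congr rfl fun i hi => h i ((Finset.mem_range.1 hi).trans_le (N.2.2 k))
  simp only [eq_at]

theorem lowerSemicontinuous_partialSumVariation (ht : 0 ≤ t) (n : ℕ) :
    LowerSemicontinuous fun a : ℕ → E => partialSumVariation t a n :=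
  lowerSemicontinuous_iSup fun N =>
    (ENNReal.continuous_rpow_const).comp_lowerSemicontinuous
      (lowerSemicontinuous_tsum fun k => by
        refine Continuous.lowerSemicontinuous ?_
        fun_prop)
      (ENNReal.monotone_rpow_of_nonneg (by positivity))

theorem measurable_partialSumVariation [MeasurableSpace E] [BorelSpace E]
    [SecondCountableTopology E] (ht : 0 ≤ t) (n : ℕ) :
    Measurable fun a : ℕ → E => partialSumVariation t a n :=
  (lowerSemicontinuous_partialSumVariation ht n).measurable

theorem exists_lt_and_le_and_lt_succ {α : Type*} [LinearOrder α] {u : ℕ → α} {l : α} {n : ℕ}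
    (h₀ : u 0 ≤ l) (h : l < u n) : ∃ m < n, u m ≤ l ∧ l < u (m + 1) := by
  induction n with
  | zero => exact absurd h h₀.not_gt
  | succ n ih =>
    rcases le_or_gt (u n) l with hn | hn
    · exact ⟨n, n.lt_succ_self, hn, h⟩
    · exact (ih hn).imp fun m hm => ⟨hm.1.trans n.lt_succ_self, hm.2⟩

theorem lt_partialSumVariation_of_three_mul_lt (ht : 1 ≤ t) {l : ℝ≥0∞}
    (hb : ∀ i < n, b i = if l < partialSumVariation t a i then a i else 0)
    (hsmall : ∀ i < n, ‖a i‖ₑ ≤ l) (h : 3 * l < partialSumVariation t a n) :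
    l < partialSumVariation t b n := by
  have hl : l < partialSumVariation t a n :=
    lt_of_le_of_lt (by simpa using mul_le_mul_left (by norm_num : (1 : ℝ≥0∞) ≤ 3) l) h
  obtain ⟨T, hTn, hT, hT'⟩ : ∃ T < n, partialSumVariation t a T ≤ l
      ∧ l < partialSumVariation t a (T + 1) :=
    exists_lt_and_le_and_lt_succ (by simp [partialSumVariation_zero ht]) hl
  have decomposition : ∀ i < n,
      a i = ((Set.Iio T).indicator a + Pi.single T (a T) + b : ℕ → E) i := by
    intro i hin
    rw [Pi.add_apply, Pi.add_apply, hb i hin]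
    rcases lt_trichotomy i T with hi | rfl | hi
    · have := (partialSumVariation_mono t a hi.le).trans hT
      simp [hi, hi.ne, this]
    · simp [hT]
    · have := hT'.trans_le (partialSumVariation_mono t a hi)
      simp [hi.le, hi.ne', this]
  by_contra! hcontra
  refine absurd h (not_lt.2 ?_)
  calc partialSumVariation t a n
    _ ≤ partialSumVariation t ((Set.Iio T).indicator a) n
        + partialSumVariation t (Pi.single T (a T)) n + partialSumVariation t b n := by
      rw [partialSumVariation_congr decomposition]
      refine (partialSumVariation_add_le ht _ _ n).trans ?_
      gcongr
      exact partialSumVariation_add_le ht _ _ n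
    _ ≤ l + l + l := by
      gcongr
      · exact (partialSumVariation_indicator_Iio_le t a T n).trans hT
      · exact (partialSumVariation_single_le ht T _ n).trans (hsmall T hTn)
    _ = 3 * l := by ring

end PartialSums

section JumpCounter

variable {E : Type*} [NormedAddCommGroup E] {θ : ℝ} {a b : ℕ → E}

/-- The greedy jump counter at threshold `θ`: it accumulates the terms of `a` in its first
component, and whenever the accumulated norm reaches `θ` it resets that component to zero and
increments the second. -/
def jumpCounter (θ : ℝ) (a : ℕ → E) : ℕ → E × ℕ
  | 0 => (0, 0)
  | n + 1 =>
    if θ ≤ ‖(jumpCounter θ a n).1 + a n‖ then (0, (jumpCounter θ a n).2 + 1)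
    else ((jumpCounter θ a n).1 + a n, (jumpCounter θ a n).2)

theorem jumpCounter_congr {n : ℕ} (h : ∀ i < n, a i = b i) :
    jumpCounter θ a n = jumpCounter θ b n := by
  induction n with
  | zero => rfl
  | succ n ih => simp only [jumpCounter, ih fun i hi => h i (hi.trans n.lt_succ_self),
      h n n.lt_succ_self]

theorem norm_jumpCounter_fst_lt (hθ : 0 < θ) (a : ℕ → E) (n : ℕ) :
    ‖(jumpCounter θ a n).1‖ < θ := by
  cases n with
  | zero => simpa [jumpCounter] using hθ
  | succ n =>
    rw [jumpCounter]
    split_ifs with h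
    · simpa using hθ
    · exact not_le.1 h

theorem monotone_jumpCounter_snd (θ : ℝ) (a : ℕ → E) :
    Monotone fun n => (jumpCounter θ a n).2 := by
  refine monotone_nat_of_le_succ fun n => ?_
  rw [jumpCounter]
  split_ifs <;> simp

theorem jumpCounter_fst_sub_fst {m n : ℕ} (hmn : m ≤ n)
    (hcount : (jumpCounter θ a n).2 = (jumpCounter θ a m).2) :
    (jumpCounter θ a n).1 - (jumpCounter θ a m).1
      = ∑ i ∈ Finset.range n, a i - ∑ i ∈ Finset.range m, a i := by
  induction n, hmn using Nat.le_induction with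
  | base => simp
  | succ n hmn ih =>
    have h₁ : (jumpCounter θ a m).2 ≤ (jumpCounter θ a n).2 := monotone_jumpCounter_snd θ a hmn
    rw [jumpCounter] at hcount ⊢
    split_ifs at hcount ⊢
    · exact absurd hcount (by simp only; omega)
    · rw [Finset.sum_range_succ, add_sub_right_comm, ih hcount, add_sub_right_comm]

theorem jumpCounter_snd_lt_of_jump (hθ : 0 < θ) {m n : ℕ} (hmn : m ≤ n)
    (hjump : 2 * θ ≤ ‖∑ i ∈ Finset.range n, a i - ∑ i ∈ Finset.range m, a i‖) :
    (jumpCounter θ a m).2 < (jumpCounter θ a n).2 := by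
  refine (monotone_jumpCounter_snd θ a hmn).lt_of_ne fun heq => ?_
  rw [← jumpCounter_fst_sub_fst hmn heq.symm] at hjump
  have := norm_sub_le (jumpCounter θ a n).1 (jumpCounter θ a m).1
  linarith [norm_jumpCounter_fst_lt hθ a n, norm_jumpCounter_fst_lt hθ a m]

theorem sum_jump_indicator_le_jumpCounter_snd (hθ : 0 < θ) {N : ℕ → ℕ} (hN : Monotone N) (M : ℕ) :
    (∑ k ∈ Finset.range M, if 2 * θ ≤ ‖∑ i ∈ Finset.range (N (k + 1)), a i
      - ∑ i ∈ Finset.range (N k), a i‖ then 1 else 0) ≤ (jumpCounter θ a (N M)).2 := by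
  induction M with
  | zero => simp
  | succ M ih =>
    rw [Finset.sum_range_succ]
    split_ifs with hjump
    · exact Nat.succ_le_of_lt (ih.trans_lt (jumpCounter_snd_lt_of_jump hθ (hN M.le_succ) hjump))
    · exact ih.trans (monotone_jumpCounter_snd θ a (hN M.le_succ))

theorem tsum_jump_indicator_le_jumpCounter_snd (hθ : 0 < θ) {N : ℕ → ℕ} (hN : Monotone N) {n : ℕ}
    (hNn : ∀ k, N k ≤ n) :
    (∑' k, if 2 * θ ≤ ‖∑ i ∈ Finset.range (N (k + 1)), a i - ∑ i ∈ Finset.range (N k), a i‖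
      then 1 else 0 : ℝ≥0∞) ≤ (jumpCounter θ a n).2 := by
  refine ENNReal.tsum_le_of_sum_range_le fun M => ?_
  exact_mod_cast (sum_jump_indicator_le_jumpCounter_snd hθ hN M).trans
    (monotone_jumpCounter_snd θ a (hNn M))

theorem measurable_jumpCounter [MeasurableSpace E] [BorelSpace E] [SecondCountableTopology E]
    (θ : ℝ) (n : ℕ) : Measurable fun a : ℕ → E => jumpCounter θ a n := by
  induction n with
  | zero => exact measurable_const
  | succ n ih =>
    simp only [jumpCounter]
    exact Measurable.ite (measurableSet_le measurable_const (by fun_prop)) (by fun_prop)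
      (by fun_prop)

end JumpCounter

section JumpPotential

variable {E : Type*} [NormedAddCommGroup E] {θ : ℝ}

/-- The potential `√(1 + (‖y‖ / θ)²) - 1`, a smoothing of `‖y‖ / θ`: quadratic near the origin,
so that its increments along a martingale are second order, and linear at infinity. -/
def jumpPotential (θ : ℝ) (y : E) : ℝ := √(1 + (‖y‖ / θ) ^ 2) - 1

theorem jumpPotential_zero (θ : ℝ) : jumpPotential θ (0 : E) = 0 := by simp [jumpPotential]

theorem jumpPotential_nonneg (θ : ℝ) (y : E) : 0 ≤ jumpPotential θ y :=
  sub_nonneg.2 (Real.one_le_sqrt.2 (le_add_of_nonneg_right (sq_nonneg _)))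

theorem one_fourth_le_jumpPotential (hθ : 0 < θ) {y : E} (hy : θ ≤ ‖y‖) :
    1 / 4 ≤ jumpPotential θ y := by
  have hy' : 1 ≤ (‖y‖ / θ) ^ 2 := one_le_pow₀ ((one_le_div hθ).2 hy)
  have : 5 / 4 ≤ √(1 + (‖y‖ / θ) ^ 2) := Real.le_sqrt_of_sq_le (by linarith)
  rw [jumpPotential]
  linarith

theorem jumpPotential_add_add_sub_le [InnerProductSpace ℝ E] (hθ : 0 < θ) (y d : E) :
    jumpPotential θ (y + d) + jumpPotential θ (y - d)
      ≤ 2 * (jumpPotential θ y + min (‖d‖ / θ) ((‖d‖ / θ) ^ 2)) := by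
  have parallelogram : (‖y + d‖ / θ) ^ 2 + (‖y - d‖ / θ) ^ 2
      = 2 * ((‖y‖ / θ) ^ 2 + (‖d‖ / θ) ^ 2) := by
    have := parallelogram_law_with_norm ℝ y d
    field_simp
    linarith
  unfold jumpPotential
  set u := ‖d‖ / θ
  have hu : 0 ≤ u := by positivity
  have sq_A := Real.sq_sqrt (by positivity : 0 ≤ 1 + (‖y + d‖ / θ) ^ 2)
  have sq_B := Real.sq_sqrt (by positivity : 0 ≤ 1 + (‖y - d‖ / θ) ^ 2)
  have sq_Z := Real.sq_sqrt (by positivity : 0 ≤ 1 + (‖y‖ / θ) ^ 2)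
  have one_le_Z : 1 ≤ √(1 + (‖y‖ / θ) ^ 2) :=
    Real.one_le_sqrt.2 (le_add_of_nonneg_right (sq_nonneg _))
  set A := √(1 + (‖y + d‖ / θ) ^ 2)
  set B := √(1 + (‖y - d‖ / θ) ^ 2)
  set Z := √(1 + (‖y‖ / θ) ^ 2)
  have hm : Z ^ 2 + u ^ 2 ≤ (Z + min u (u ^ 2)) ^ 2 := by
    rcases min_choice u (u ^ 2) with h | h <;> rw [h] <;> nlinarith
  have : A + B ≤ 2 * (Z + min u (u ^ 2)) := by
    refine le_of_sq_le_sq ?_ (by positivity)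
    nlinarith [sq_nonneg (A - B)]
  linarith

/-- The potential of a state of the greedy jump counter; it dominates a quarter of the count. -/
def jumpCounterPotential (θ : ℝ) (s : E × ℕ) : ℝ := jumpPotential θ s.1 + s.2 / 4

theorem jumpCounterPotential_nonneg (θ : ℝ) (s : E × ℕ) : 0 ≤ jumpCounterPotential θ s :=
  add_nonneg (jumpPotential_nonneg θ s.1) (by positivity)

theorem jumpCounterPotential_succ_le (hθ : 0 < θ) (a : ℕ → E) (n : ℕ) :
    jumpCounterPotential θ (jumpCounter θ a (n + 1))
      ≤ jumpCounterPotential θ ((jumpCounter θ a n).1 + a n, (jumpCounter θ a n).2) := by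
  rw [jumpCounter]
  split_ifs with hjump
  · have := one_fourth_le_jumpPotential hθ hjump
    simp only [jumpCounterPotential, jumpPotential_zero]
    push_cast
    linarith
  · exact le_rfl

theorem measurable_jumpCounterPotential [MeasurableSpace E] [BorelSpace E] (θ : ℝ) :
    Measurable (jumpCounterPotential (E := E) θ) := by
  unfold jumpCounterPotential jumpPotential
  fun_prop

end JumpPotential

section ConditionalSymmetry

variable {X E : Type*} [MeasurableSpace X] {μ : Measure X}

theorem lintegral_le_of_add_comp_le {σ : X → X} (hσ : MeasurePreserving σ μ μ) {u v : X → ℝ≥0∞}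
    (hu : Measurable u) (h : ∀ x, u x + u (σ x) ≤ 2 * v x) : ∫⁻ x, u x ∂μ ≤ ∫⁻ x, v x ∂μ := by
  rw [← ENNReal.mul_le_mul_iff_right two_ne_zero ofNat_ne_top]
  calc 2 * ∫⁻ x, u x ∂μ
    _ = ∫⁻ x, u x + u (σ x) ∂μ := by rw [lintegral_add_left hu, hσ.lintegral_comp hu, two_mul]
    _ ≤ ∫⁻ x, 2 * v x ∂μ := lintegral_mono h
    _ = 2 * ∫⁻ x, v x ∂μ := lintegral_const_mul' _ _ ofNat_ne_top

/-- A sequence of functions on a measure space is conditionally symmetric if the sign of each term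
can be flipped by a measure-preserving map that leaves all earlier terms unchanged. This is the
property of martingale differences such as Haar series that replaces conditional expectations. -/
structure IsConditionallySymmetric [MeasurableSpace E] [Neg E] (F : ℕ → X → E) (μ : Measure X) :
    Prop where
  measurable : ∀ n, Measurable (F n)
  exists_flip : ∀ n, ∃ σ : X → X, MeasurePreserving σ μ μ ∧
    (∀ i < n, ∀ x, F i (σ x) = F i x) ∧ ∀ x, F n (σ x) = -F n x

theorem IsConditionallySymmetric.measurable_pi [MeasurableSpace E] [Neg E] {F : ℕ → X → E}
    (hF : IsConditionallySymmetric F μ) : Measurable fun x i => F i x :=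
  measurable_pi_lambda _ hF.measurable

/-- The sequence obtained from `a` by replacing the terms `a n` for which `P n a` fails by `0`;
when `P n a` depends only on the past of `n`, this is a martingale transform. -/
def gate [Zero E] (P : ℕ → (ℕ → E) → Prop) (a : ℕ → E) (n : ℕ) : E :=
  open Classical in if P n a then a n else 0

variable [NormedAddCommGroup E] [MeasurableSpace E]

theorem IsConditionallySymmetric.gate_of_congr {F : ℕ → X → E} (hF : IsConditionallySymmetric F μ)
    {P : ℕ → (ℕ → E) → Prop} (hP : ∀ n, MeasurableSet {a | P n a})
    (hcongr : ∀ n a b, (∀ i < n, a i = b i) → ‖a n‖ = ‖b n‖ → (P n a ↔ P n b)) :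
    IsConditionallySymmetric (fun n x => gate P (fun i => F i x) n) μ where
  measurable n := open Classical in
    (Measurable.ite (hP n) (measurable_pi_apply n) measurable_const).comp hF.measurable_pi
  exists_flip n := by
    classical
    obtain ⟨σ, hσ, past, flip⟩ := hF.exists_flip n
    refine ⟨σ, hσ, fun i hi x => ?_, fun x => ?_⟩
    · exact if_congr (hcongr i _ _ (fun j hj => past j (hj.trans hi) x)
        (congrArg norm (past i hi x))) (past i hi x) rfl
    · have gate_iff := hcongr n (fun j => F j (σ x)) (fun j => F j x) (fun j hj => past j hj x)
        (by rw [flip x, norm_neg])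
      exact (if_congr gate_iff (flip x) neg_zero.symm).trans (apply_ite Neg.neg _ _ _).symm

variable [BorelSpace E] [SecondCountableTopology E] [InnerProductSpace ℝ E] {F : ℕ → X → E}
  {θ : ℝ}

theorem IsConditionallySymmetric.lintegral_jumpCounterPotential_succ_le
    (hF : IsConditionallySymmetric F μ) (hθ : 0 < θ) (n : ℕ) :
    ∫⁻ x, ENNReal.ofReal (jumpCounterPotential θ (jumpCounter θ (fun i => F i x) (n + 1))) ∂μ
      ≤ ∫⁻ x, ENNReal.ofReal (jumpCounterPotential θ (jumpCounter θ (fun i => F i x) n)) ∂μ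
        + ∫⁻ x, ENNReal.ofReal (min (‖F n x‖ / θ) ((‖F n x‖ / θ) ^ 2)) ∂μ := by
  obtain ⟨σ, hσ, past, flip⟩ := hF.exists_flip n
  set s : X → E × ℕ := fun x => jumpCounter θ (fun i => F i x) n
  have hs : Measurable s := (measurable_jumpCounter θ n).comp hF.measurable_pi
  have next_meas : Measurable fun x => ((s x).1 + F n x, (s x).2) :=
    (hs.fst.add (hF.measurable n)).prodMk hs.snd
  have s_flip (x : X) : s (σ x) = s x := jumpCounter_congr fun i hi => past i hi x
  have hΦ := measurable_jumpCounterPotential (E := E) θ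
  have potential_meas : Measurable fun x =>
      ENNReal.ofReal (jumpCounterPotential θ (jumpCounter θ (fun i => F i x) n)) :=
    (hΦ.comp hs).ennreal_ofReal
  rw [← lintegral_add_left potential_meas]
  refine (lintegral_mono fun x => ENNReal.ofReal_le_ofReal
    (jumpCounterPotential_succ_le hθ _ n)).trans
    (lintegral_le_of_add_comp_le hσ (hΦ.comp next_meas).ennreal_ofReal fun x => ?_)
  change ENNReal.ofReal (jumpCounterPotential θ ((s x).1 + F n x, (s x).2))
    + ENNReal.ofReal (jumpCounterPotential θ ((s (σ x)).1 + F n (σ x), (s (σ x)).2)) ≤ _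
  rw [s_flip, flip, ← sub_eq_add_neg,
    ← ENNReal.ofReal_add (jumpCounterPotential_nonneg ..) (jumpCounterPotential_nonneg ..),
    ← ENNReal.ofReal_add (jumpCounterPotential_nonneg ..) (by positivity), ← ENNReal.ofReal_ofNat 2,
    ← ENNReal.ofReal_mul zero_le_two]
  refine ENNReal.ofReal_le_ofReal ?_
  have := jumpPotential_add_add_sub_le hθ (s x).1 (F n x)
  simp only [jumpCounterPotential]
  linarith

theorem IsConditionallySymmetric.lintegral_jumpCounterPotential_le
    (hF : IsConditionallySymmetric F μ) (hθ : 0 < θ) (n : ℕ) :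
    ∫⁻ x, ENNReal.ofReal (jumpCounterPotential θ (jumpCounter θ (fun i => F i x) n)) ∂μ
      ≤ ∑ i ∈ Finset.range n, ∫⁻ x, ENNReal.ofReal (min (‖F i x‖ / θ) ((‖F i x‖ / θ) ^ 2)) ∂μ := by
  induction n with
  | zero => simp [jumpCounter, jumpCounterPotential, jumpPotential_zero]
  | succ n ih =>
    rw [Finset.sum_range_succ]
    exact (hF.lintegral_jumpCounterPotential_succ_le hθ n).trans (add_le_add_left ih _)

theorem IsConditionallySymmetric.lintegral_jumpCounter_snd_le
    (hF : IsConditionallySymmetric F μ) (hθ : 0 < θ) (n : ℕ) :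
    ∫⁻ x, (jumpCounter θ (fun i => F i x) n).2 ∂μ
      ≤ ∑ i ∈ Finset.range n,
        ∫⁻ x, 4 * ENNReal.ofReal (min (‖F i x‖ / θ) ((‖F i x‖ / θ) ^ 2)) ∂μ := by
  calc ∫⁻ x, (jumpCounter θ (fun i => F i x) n).2 ∂μ
    _ ≤ ∫⁻ x, 4 * ENNReal.ofReal
          (jumpCounterPotential θ (jumpCounter θ (fun i => F i x) n)) ∂μ := by
      refine lintegral_mono fun x => ?_
      rw [← ENNReal.ofReal_natCast, ← ENNReal.ofReal_ofNat 4, ← ENNReal.ofReal_mul zero_le_four]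
      refine ENNReal.ofReal_le_ofReal ?_
      have := jumpPotential_nonneg θ (jumpCounter θ (fun i => F i x) n).1
      simp only [jumpCounterPotential]
      linarith
    _ ≤ _ := by
      simp only [lintegral_const_mul' (4 : ℝ≥0∞) _ ofNat_ne_top, ← Finset.mul_sum]
      gcongr
      exact hF.lintegral_jumpCounterPotential_le hθ n

end ConditionalSymmetry

section DyadicScales

variable {r t : ℝ}

/-- The inequality, uniform in `u`, that controls the sum over the dyadic thresholds `2⁻ʲ` of the
weighted numbers of jumps. -/
def DyadicJumpSummable (r t : ℝ) (C : ℝ≥0) : Prop :=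
  ∀ u : ℝ, 0 ≤ u →
    ∑' j : ℕ, ENNReal.ofReal (((2 : ℝ) ^ j) ^ (-t) * min (2 ^ j * u) ((2 ^ j * u) ^ 2))
      ≤ C * ENNReal.ofReal u ^ r

theorem min_sq_le_rpow {v : ℝ} (hv : 0 ≤ v) (hr1 : 1 ≤ r) (hr2 : r ≤ 2) :
    min v (v ^ 2) ≤ v ^ r := by
  rcases hv.eq_or_lt with rfl | hv0
  · simp [Real.zero_rpow (by linarith : r ≠ 0)]
  rcases le_total v 1 with h | h
  · calc min v (v ^ 2)
      _ ≤ v ^ (2 : ℝ) := by simp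
      _ ≤ v ^ r := Real.rpow_le_rpow_of_exponent_ge hv0 h hr2
  · calc min v (v ^ 2)
      _ ≤ v ^ (1 : ℝ) := by simp
      _ ≤ v ^ r := Real.rpow_le_rpow_of_exponent_le h hr1

theorem exists_dyadicJumpSummable_of_lt (hr1 : 1 ≤ r) (hr2 : r ≤ 2) (hrt : r < t) :
    ∃ C, DyadicJumpSummable r t C := by
  set q : ℝ := 2 ^ (r - t)
  have hq1 : q < 1 := Real.rpow_lt_one_of_one_lt_of_neg one_lt_two (by linarith)
  have hsum : Summable fun j : ℕ => q ^ j := summable_geometric_of_lt_one (by positivity) hq1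
  refine ⟨(∑' j : ℕ, ENNReal.ofReal (q ^ j)).toNNReal, fun u hu => ?_⟩
  rw [ENNReal.coe_toNNReal hsum.tsum_ofReal_ne_top, ← ENNReal.tsum_mul_right,
    ENNReal.ofReal_rpow_of_nonneg hu (by linarith)]
  refine ENNReal.tsum_le_tsum fun j => ?_
  rw [← ENNReal.ofReal_mul (by positivity)]
  refine ENNReal.ofReal_le_ofReal ?_
  calc ((2 : ℝ) ^ j) ^ (-t) * min (2 ^ j * u) ((2 ^ j * u) ^ 2)
    _ ≤ ((2 : ℝ) ^ j) ^ (-t) * (2 ^ j * u) ^ r := by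
      gcongr
      exact min_sq_le_rpow (by positivity) hr1 hr2
    _ = ((2 : ℝ) ^ j) ^ (r - t) * u ^ r := by
      rw [Real.mul_rpow (by positivity) hu, ← mul_assoc, ← Real.rpow_add (by positivity),
        neg_add_eq_sub]
    _ = q ^ j * u ^ r := by rw [← Real.rpow_pow_comm zero_le_two]

theorem rpow_neg_mul_min_sq_le {v : ℝ} (hv : 0 < v) (r : ℝ) :
    v ^ (-r) * min v (v ^ 2) ≤ 2 ^ (-(min (r - 1) (2 - r) * |Real.logb 2 v|)) := by
  set x := Real.logb 2 v
  have hvx : v = 2 ^ x := (Real.rpow_logb zero_lt_two (by norm_num) hv).symm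
  rcases le_total 0 x with hx | hx
  · calc v ^ (-r) * min v (v ^ 2)
      _ ≤ v ^ (-r) * v ^ (1 : ℝ) := by
        gcongr
        simp
      _ = 2 ^ (-((r - 1) * x)) := by
        rw [← Real.rpow_add hv, hvx, ← Real.rpow_mul zero_le_two]
        ring_nf
      _ ≤ 2 ^ (-(min (r - 1) (2 - r) * |x|)) := by
        rw [abs_of_nonneg hx]
        gcongr
        · exact one_le_two
        · exact min_le_left ..
  · calc v ^ (-r) * min v (v ^ 2)
      _ ≤ v ^ (-r) * v ^ (2 : ℝ) := by
        gcongr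
        simp
      _ = 2 ^ (-((2 - r) * -x)) := by
        rw [← Real.rpow_add hv, hvx, ← Real.rpow_mul zero_le_two]
        ring_nf
      _ ≤ 2 ^ (-(min (r - 1) (2 - r) * |x|)) := by
        rw [abs_of_nonpos hx]
        gcongr
        · exact one_le_two
        · linarith
        · exact min_le_right ..

theorem summable_two_rpow_neg_mul_abs_intCast {c : ℝ} (hc : 0 < c) :
    Summable fun m : ℤ => (2 : ℝ) ^ (-(c * |(m : ℝ)|)) := by
  have geometric : Summable fun n : ℕ => (2 : ℝ) ^ (-(c * |(n : ℝ)|)) := by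
    refine (summable_geometric_of_lt_one (by positivity)
      (Real.rpow_lt_one_of_one_lt_of_neg one_lt_two (neg_lt_zero.2 hc))).congr fun n => ?_
    rw [← Real.rpow_mul_natCast zero_le_two, Nat.abs_cast, neg_mul]
  exact summable_int_iff_summable_nat_and_neg.2
    ⟨by simpa using geometric, by simpa using geometric⟩

theorem tsum_two_rpow_neg_mul_abs_add_le {c : ℝ} (hc : 0 ≤ c) (y : ℝ) :
    ∑' j : ℕ, ENNReal.ofReal (2 ^ (-(c * |j + y|)))
      ≤ ENNReal.ofReal (2 ^ c) * ∑' m : ℤ, ENNReal.ofReal (2 ^ (-(c * |(m : ℝ)|))) := by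
  have hinj : Function.Injective fun j : ℕ => (j : ℤ) + ⌊y⌋ := fun i j h => by simpa using h
  refine le_trans ?_ (mul_le_mul_right (ENNReal.tsum_comp_le_tsum_of_injective hinj _) _)
  rw [← ENNReal.tsum_mul_left]
  refine ENNReal.tsum_le_tsum fun j => ?_
  rw [← ENNReal.ofReal_mul (by positivity), ← Real.rpow_add zero_lt_two]
  refine ENNReal.ofReal_le_ofReal (Real.rpow_le_rpow_of_exponent_le one_le_two ?_)
  have : |(((j : ℤ) + ⌊y⌋ : ℤ) : ℝ)| ≤ |j + y| + 1 := by
    push_cast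
    have h₁ := Int.floor_le y
    have h₂ := Int.lt_floor_add_one y
    rw [abs_le]
    constructor <;> cases abs_cases (j + y) <;> linarith
  nlinarith

theorem exists_dyadicJumpSummable_self (hr1 : 1 < r) (hr2 : r < 2) :
    ∃ C, DyadicJumpSummable r r C := by
  set c := min (r - 1) (2 - r)
  have hc : 0 < c := lt_min (by linarith) (by linarith)
  have hfin := (summable_two_rpow_neg_mul_abs_intCast hc).tsum_ofReal_ne_top
  refine ⟨(ENNReal.ofReal (2 ^ c)
    * ∑' m : ℤ, ENNReal.ofReal (2 ^ (-(c * |(m : ℝ)|)))).toNNReal, fun u hu => ?_⟩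
  rw [ENNReal.coe_toNNReal (ENNReal.mul_ne_top ofReal_ne_top hfin),
    ENNReal.ofReal_rpow_of_nonneg hu (by linarith)]
  rcases hu.eq_or_lt with rfl | hu
  · simp
  refine le_trans ?_ (mul_le_mul_left
    (tsum_two_rpow_neg_mul_abs_add_le hc.le (Real.logb 2 u)) _)
  rw [← ENNReal.tsum_mul_right]
  refine ENNReal.tsum_le_tsum fun j => ?_
  rw [← ENNReal.ofReal_mul (by positivity)]
  refine ENNReal.ofReal_le_ofReal ?_
  have hv : 0 < 2 ^ j * u := by positivity
  calc ((2 : ℝ) ^ j) ^ (-r) * min (2 ^ j * u) ((2 ^ j * u) ^ 2)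
    _ = (2 ^ j * u) ^ (-r) * min (2 ^ j * u) ((2 ^ j * u) ^ 2) * u ^ r := by
      rw [Real.mul_rpow (by positivity) hu.le, Real.rpow_neg hu.le]
      field_simp
    _ ≤ 2 ^ (-(c * |Real.logb 2 (2 ^ j * u)|)) * u ^ r := by
      gcongr
      exact rpow_neg_mul_min_sq_le hv r
    _ = 2 ^ (-(c * |j + Real.logb 2 u|)) * u ^ r := by
      rw [Real.logb_mul (by positivity) hu.ne', Real.logb_pow, Real.logb_self_eq_one one_lt_two,
        mul_one]

end DyadicScales

section WeakType

theorem one_le_tsum_min_one {κ : Type*} {u : κ → ℝ≥0∞} (h : 1 ≤ ∑' k, u k) :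
    1 ≤ ∑' k, min (u k) 1 := by
  by_cases hu : ∃ k, 1 ≤ u k
  · obtain ⟨k, hk⟩ := hu
    exact (min_eq_right hk).ge.trans (ENNReal.le_tsum k)
  · push Not at hu
    simpa only [fun k => min_eq_left (hu k).le] using h

theorem min_rpow_one_le_tsum_dyadic_indicator {t : ℝ} (ht : 0 < t) {u : ℝ} (hu : 0 ≤ u) :
    min (ENNReal.ofReal u ^ t) 1
      ≤ ∑' j : ℕ, ENNReal.ofReal (((2 : ℝ) ^ j) ^ (-t)) * if 1 ≤ 2 ^ (j + 1) * u then 1 else 0 := by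
  rcases hu.eq_or_lt with rfl | hu0
  · simp [ENNReal.zero_rpow_of_pos ht]
  obtain ⟨j, hj, hj'⟩ := exists_nat_pow_near_of_lt_one (lt_min hu0 one_pos) (min_le_right u 1)
    (by norm_num : (0 : ℝ) < 2⁻¹) (by norm_num)
  refine le_trans ?_ (ENNReal.le_tsum j)
  have scale : 1 ≤ 2 ^ (j + 1) * u := by
    have := hj.le.trans (min_le_left u 1)
    rwa [inv_pow, inv_le_iff_one_le_mul₀' (by positivity)] at this
  rw [if_pos scale, mul_one]
  calc min (ENNReal.ofReal u ^ t) 1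
    _ = ENNReal.ofReal (min u 1) ^ t := by
      rw [ENNReal.ofReal_min, ENNReal.ofReal_one,
        (ENNReal.monotone_rpow_of_nonneg ht.le).map_min, ENNReal.one_rpow]
    _ ≤ ENNReal.ofReal (2⁻¹ ^ j) ^ t := by gcongr
    _ = ENNReal.ofReal (((2 : ℝ) ^ j) ^ (-t)) := by
      rw [ENNReal.ofReal_rpow_of_nonneg (by positivity) ht.le, inv_pow,
        Real.inv_rpow (by positivity), Real.rpow_neg (by positivity)]

variable {E : Type*} [NormedAddCommGroup E] {r t l : ℝ}

theorem one_le_tsum_jumpCounter (ht : 0 < t) (hl : 0 < l) {a : ℕ → E} {n : ℕ}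
    (h : ENNReal.ofReal l < partialSumVariation t a n) :
    1 ≤ ∑' j : ℕ, ENNReal.ofReal (((2 : ℝ) ^ j) ^ (-t))
      * (jumpCounter (l / 2 ^ (j + 2)) a n).2 := by
  obtain ⟨⟨N, hN, hNn⟩, hlN⟩ := lt_iSup_iff.1 h
  set D : ℕ → ℝ := fun k => ‖∑ i ∈ Finset.range (N (k + 1)), a i - ∑ i ∈ Finset.range (N k), a i‖
  have normalized : 1 ≤ ∑' k, ENNReal.ofReal (D k / l) ^ t := by
    have hlt := ENNReal.rpow_le_rpow hlN.le ht.le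
    rw [← ENNReal.rpow_mul, one_div_mul_cancel ht.ne', ENNReal.rpow_one] at hlt
    have hl0 : ENNReal.ofReal l ^ t ≠ 0 := by simp [hl, ht.not_gt]
    have hl_top : ENNReal.ofReal l ^ t ≠ ∞ := ENNReal.rpow_ne_top_of_nonneg ht.le ofReal_ne_top
    calc 1
      _ ≤ (∑' k, ENNReal.ofReal (D k) ^ t) / ENNReal.ofReal l ^ t := by
        rw [ENNReal.le_div_iff_mul_le (Or.inl hl0) (Or.inl hl_top), one_mul]
        simpa only [D, ofReal_norm, ← edist_eq_enorm_sub] using hlt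
      _ = ∑' k, ENNReal.ofReal (D k / l) ^ t := by
        simp only [div_eq_mul_inv _ (_ ^ t), ← ENNReal.tsum_mul_right, ENNReal.ofReal_div_of_pos hl,
          ENNReal.div_rpow_of_nonneg _ _ ht.le]
  have threshold (j k : ℕ) : 1 ≤ 2 ^ (j + 1) * (D k / l) ↔ 2 * (l / 2 ^ (j + 2)) ≤ D k := by
    have : 2 * (l / 2 ^ (j + 2)) = l / 2 ^ (j + 1) := by
      rw [pow_succ 2 (j + 1)]
      field_simp
    rw [this, div_le_iff₀' (by positivity), ← mul_div_assoc, one_le_div hl]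
  calc 1
    _ ≤ ∑' k, min (ENNReal.ofReal (D k / l) ^ t) 1 := one_le_tsum_min_one normalized
    _ ≤ ∑' k, ∑' j : ℕ, ENNReal.ofReal (((2 : ℝ) ^ j) ^ (-t))
          * if 2 * (l / 2 ^ (j + 2)) ≤ D k then 1 else 0 :=
      ENNReal.tsum_le_tsum fun k => by
        simpa only [threshold] using
          min_rpow_one_le_tsum_dyadic_indicator ht (u := D k / l) (by positivity)
    _ ≤ _ := by
      rw [ENNReal.tsum_comm]
      simp only [ENNReal.tsum_mul_left]
      gcongr with j
      exact tsum_jump_indicator_le_jumpCounter_snd (by positivity) hN hNn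

theorem DyadicJumpSummable.tsum_jumpCounter_bound_le {C : ℝ≥0} (hC : DyadicJumpSummable r t C)
    (hr : 0 ≤ r) (hl : 0 < l) (y : E) :
    ∑' j : ℕ, ENNReal.ofReal (((2 : ℝ) ^ j) ^ (-t)) * (4 * ENNReal.ofReal
        (min (‖y‖ / (l / 2 ^ (j + 2))) ((‖y‖ / (l / 2 ^ (j + 2))) ^ 2)))
      ≤ 4 * C * ENNReal.ofReal (4 / l) ^ r * ‖y‖ₑ ^ r := by
  have rescale (j : ℕ) : ‖y‖ / (l / 2 ^ (j + 2)) = 2 ^ j * (4 / l * ‖y‖) := by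
    field_simp
    ring
  simp only [rescale, mul_left_comm _ (4 : ℝ≥0∞), ENNReal.tsum_mul_left]
  calc 4 * ∑' j : ℕ, ENNReal.ofReal (((2 : ℝ) ^ j) ^ (-t)) * ENNReal.ofReal
        (min (2 ^ j * (4 / l * ‖y‖)) ((2 ^ j * (4 / l * ‖y‖)) ^ 2))
    _ ≤ 4 * (C * ENNReal.ofReal (4 / l * ‖y‖) ^ r) := by
      gcongr
      refine le_trans (ENNReal.tsum_le_tsum fun j => ?_) (hC (4 / l * ‖y‖) (by positivity))
      rw [ENNReal.ofReal_mul (by positivity)]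
    _ = 4 * C * ENNReal.ofReal (4 / l) ^ r * ‖y‖ₑ ^ r := by
      rw [ENNReal.ofReal_mul (by positivity), ENNReal.mul_rpow_of_nonneg _ _ hr, ofReal_norm]
      ring

theorem lintegral_tsum_const_mul {X κ : Type*} [MeasurableSpace X] {μ : Measure X} [Countable κ]
    (w : κ → ℝ≥0∞) {u : κ → X → ℝ≥0∞} (hu : ∀ k, Measurable (u k)) :
    ∫⁻ x, ∑' k, w k * u k x ∂μ = ∑' k, w k * ∫⁻ x, u k x ∂μ := by
  rw [lintegral_tsum fun k => ((hu k).const_mul (w k)).aemeasurable]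
  exact tsum_congr fun k => lintegral_const_mul _ (hu k)

variable {X : Type*} [MeasurableSpace X] {μ : Measure X} [MeasurableSpace E] [BorelSpace E]
  [SecondCountableTopology E] [InnerProductSpace ℝ E] {F : ℕ → X → E}

theorem IsConditionallySymmetric.meas_lt_partialSumVariation_le {C : ℝ≥0}
    (hF : IsConditionallySymmetric F μ) (hC : DyadicJumpSummable r t C) (hr : 0 ≤ r) (ht : 0 < t)
    (hl : 0 < l) (n : ℕ) :
    μ {x | ENNReal.ofReal l < partialSumVariation t (fun i => F i x) n}
      ≤ 4 * C * ENNReal.ofReal (4 / l) ^ r * ∫⁻ x, ∑ i ∈ Finset.range n, ‖F i x‖ₑ ^ r ∂μ := by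
  set w : ℕ → ℝ≥0∞ := fun j => ENNReal.ofReal (((2 : ℝ) ^ j) ^ (-t))
  set θ : ℕ → ℝ := fun j => l / 2 ^ (j + 2)
  set count : ℕ → X → ℝ≥0∞ := fun j x => (jumpCounter (θ j) (fun i => F i x) n).2
  set bound : ℕ → ℕ → X → ℝ≥0∞ := fun j i x =>
    4 * ENNReal.ofReal (min (‖F i x‖ / θ j) ((‖F i x‖ / θ j) ^ 2))
  have count_meas (j : ℕ) : Measurable (count j) :=
    (measurable_of_countable _).comp ((measurable_jumpCounter (θ j) n).comp hF.measurable_pi).snd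
  have norm_meas (i : ℕ) := (hF.measurable i).norm
  have bound_meas (j i : ℕ) : Measurable (bound j i) := by fun_prop
  calc μ {x | ENNReal.ofReal l < partialSumVariation t (fun i => F i x) n}
    _ ≤ μ {x | 1 ≤ ∑' j, w j * count j x} :=
      measure_mono fun x hx => one_le_tsum_jumpCounter ht hl hx
    _ ≤ ∫⁻ x, ∑' j, w j * count j x ∂μ := by
      simpa using mul_meas_ge_le_lintegral (μ := μ)
        (Measurable.tsum fun j => (count_meas j).const_mul (w j)) 1
    _ = ∑' j, w j * ∫⁻ x, count j x ∂μ := lintegral_tsum_const_mul w count_meas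
    _ ≤ ∑' j, w j * ∑ i ∈ Finset.range n, ∫⁻ x, bound j i x ∂μ := by
      gcongr with j
      exact hF.lintegral_jumpCounter_snd_le (by positivity) n
    _ = ∑ i ∈ Finset.range n, ∫⁻ x, ∑' j, w j * bound j i x ∂μ := by
      simp only [Finset.mul_sum]
      rw [Summable.tsum_finsetSum fun _ _ => ENNReal.summable]
      exact Finset.sum_congr rfl fun i _ => (lintegral_tsum_const_mul w (bound_meas · i)).symm
    _ ≤ ∑ i ∈ Finset.range n, ∫⁻ x, 4 * C * ENNReal.ofReal (4 / l) ^ r * ‖F i x‖ₑ ^ r ∂μ := by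
      gcongr with i _ x
      exact hC.tsum_jumpCounter_bound_le hr hl (F i x)
    _ = _ := by
      have enorm_meas (i : ℕ) : Measurable fun x => ‖F i x‖ₑ ^ r :=
        (hF.measurable i).enorm.pow_const r
      rw [lintegral_finsetSum _ fun i _ => enorm_meas i, Finset.mul_sum]
      exact Finset.sum_congr rfl fun i _ => lintegral_const_mul _ (enorm_meas i)

end WeakType

section LayerCake

variable {X : Type*} [MeasurableSpace X] {μ : Measure X} {p : ℝ} {u v : X → ℝ≥0∞}

/-- The layer cake integral `∫₀^∞ p l ^ (p - 1) μ {c l < u} dl`, which is `c⁻ᵖ ∫ uᵖ dμ`. -/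
def layerCakeIntegral (μ : Measure X) (p : ℝ) (u : X → ℝ≥0∞) (c : ℝ) : ℝ≥0∞ :=
  ∫⁻ l in Set.Ioi (0 : ℝ), μ {x | ENNReal.ofReal (c * l) < u x} * ENNReal.ofReal (p * l ^ (p - 1))

theorem lintegral_rpow_eq_mul_layerCakeIntegral (hu : Measurable u) (hu_top : ∀ x, u x ≠ ∞)
    (hp : 0 < p) {c : ℝ} (hc : 0 < c) :
    ∫⁻ x, u x ^ p ∂μ = ENNReal.ofReal (c ^ p) * layerCakeIntegral μ p u c := by
  have layer_cake := lintegral_rpow_eq_lintegral_meas_lt_mul μ (f := fun x => c⁻¹ * (u x).toReal)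
    (.of_forall fun x => by positivity) (hu.ennreal_toReal.const_mul _).aemeasurable hp
  have level_set : ∀ l ∈ Set.Ioi (0 : ℝ),
      {x | l < c⁻¹ * (u x).toReal} = {x | ENNReal.ofReal (c * l) < u x} := by
    intro l hl
    ext x
    simp only [Set.mem_ofPred_eq]
    rw [ENNReal.ofReal_lt_iff_lt_toReal (mul_pos hc hl).le (hu_top x), lt_inv_mul_iff₀ hc]
  have integral_eq : layerCakeIntegral μ p u c
      = ∫⁻ x, ENNReal.ofReal ((c⁻¹ * (u x).toReal) ^ p) ∂μ := by
    rw [layer_cake, ← lintegral_const_mul' _ _ ofReal_ne_top]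
    refine setLIntegral_congr_fun measurableSet_Ioi fun l hl => ?_
    rw [level_set l hl, ENNReal.ofReal_mul hp.le, mul_left_comm]
  rw [integral_eq, ← lintegral_const_mul' _ _ ofReal_ne_top]
  refine lintegral_congr fun x => ?_
  rw [← ENNReal.ofReal_mul (by positivity), ← Real.mul_rpow hc.le (by positivity),
    mul_inv_cancel_left₀ hc.ne', ← ENNReal.ofReal_rpow_of_nonneg toReal_nonneg hp.le,
    ENNReal.ofReal_toReal (hu_top x)]

theorem layerCakeIntegral_le_of_good_lambda (p : ℝ) {β γ : ℝ} (hγ : 0 ≤ γ) {ε : ℝ≥0∞}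
    (hε : ε ≠ ∞)
    (good_lambda : ∀ l : ℝ, 0 < l → μ {x | ENNReal.ofReal (β * l) < u x}
      ≤ μ {x | ENNReal.ofReal (γ * l) < v x} + ε * μ {x | ENNReal.ofReal l < u x}) :
    layerCakeIntegral μ p u β ≤ layerCakeIntegral μ p v γ + ε * layerCakeIntegral μ p u 1 := by
  have measurable_level : Measurable fun l : ℝ => μ {x | ENNReal.ofReal (γ * l) < v x} := by
    refine Antitone.measurable fun a b hab => measure_mono fun x hx => ?_
    exact (by gcongr : ENNReal.ofReal (γ * a) ≤ ENNReal.ofReal (γ * b)).trans_lt hx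
  have measurable_integrand : Measurable fun l : ℝ =>
      μ {x | ENNReal.ofReal (γ * l) < v x} * ENNReal.ofReal (p * l ^ (p - 1)) :=
    measurable_level.mul (by fun_prop)
  unfold layerCakeIntegral
  rw [← lintegral_const_mul' _ _ hε, ← lintegral_add_left measurable_integrand]
  refine setLIntegral_mono' measurableSet_Ioi fun l hl => ?_
  rw [← mul_assoc, ← add_mul, one_mul]
  gcongr
  exact good_lambda l hl

theorem lintegral_rpow_le_of_good_lambda (hu : Measurable u) (hv : Measurable v)
    (hu_top : ∀ x, u x ≠ ∞) (hv_top : ∀ x, v x ≠ ∞) (hp : 0 < p) {β γ : ℝ} (hβ : 0 < β)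
    (hγ : 0 < γ) {ε : ℝ≥0∞} (hε : ENNReal.ofReal (β ^ p) * ε ≤ 2⁻¹)
    (good_lambda : ∀ l : ℝ, 0 < l → μ {x | ENNReal.ofReal (β * l) < u x}
      ≤ μ {x | ENNReal.ofReal (γ * l) < v x} + ε * μ {x | ENNReal.ofReal l < u x})
    (hfin : ∫⁻ x, u x ^ p ∂μ ≠ ∞) :
    ∫⁻ x, u x ^ p ∂μ ≤ 2 * ENNReal.ofReal ((β / γ) ^ p) * ∫⁻ x, v x ^ p ∂μ := by
  have hε_top : ε ≠ ∞ := by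
    rintro rfl
    rw [ENNReal.mul_top (ENNReal.ofReal_pos.2 (by positivity)).ne'] at hε
    simp at hε
  have layer_u : layerCakeIntegral μ p u 1 = ∫⁻ x, u x ^ p ∂μ := by
    simpa using (lintegral_rpow_eq_mul_layerCakeIntegral (μ := μ) hu hu_top hp one_pos).symm
  have layer_v : ENNReal.ofReal (β ^ p) * layerCakeIntegral μ p v γ
      = ENNReal.ofReal ((β / γ) ^ p) * ∫⁻ x, v x ^ p ∂μ := by
    rw [lintegral_rpow_eq_mul_layerCakeIntegral hv hv_top hp hγ, ← mul_assoc,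
      ← ENNReal.ofReal_mul (by positivity), ← Real.mul_rpow (by positivity) hγ.le,
      div_mul_cancel₀ _ hγ.ne']
  set A := ∫⁻ x, u x ^ p ∂μ
  set B := ∫⁻ x, v x ^ p ∂μ
  have absorb : A / 2 + A / 2 ≤ ENNReal.ofReal ((β / γ) ^ p) * B + A / 2 := calc
    A / 2 + A / 2 = A := ENNReal.add_halves A
    _ = ENNReal.ofReal (β ^ p) * layerCakeIntegral μ p u β :=
      lintegral_rpow_eq_mul_layerCakeIntegral hu hu_top hp hβ
    _ ≤ ENNReal.ofReal (β ^ p) * (layerCakeIntegral μ p v γ + ε * A) := by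
      rw [← layer_u]
      gcongr
      exact layerCakeIntegral_le_of_good_lambda p hγ.le hε_top good_lambda
    _ = ENNReal.ofReal ((β / γ) ^ p) * B + ENNReal.ofReal (β ^ p) * ε * A := by
      rw [mul_add, layer_v, mul_assoc]
    _ ≤ ENNReal.ofReal ((β / γ) ^ p) * B + A / 2 := by
      rw [ENNReal.div_eq_inv_mul]
      gcongr
  have half_le := (ENNReal.add_le_add_iff_right (ENNReal.div_ne_top hfin two_ne_zero)).1 absorb
  rw [mul_assoc, mul_comm]
  exact (ENNReal.div_le_iff two_ne_zero ofNat_ne_top).1 half_le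

end LayerCake

section GoodLambda

variable {E : Type*} [NormedAddCommGroup E] {r t l : ℝ} {a b : ℕ → E} {m n : ℕ}

/-- The sum of the `r`-th powers of the norms of the first `n` terms of `a`. -/
def powerSum (r : ℝ) (a : ℕ → E) (n : ℕ) : ℝ≥0∞ := ∑ i ∈ Finset.range n, ‖a i‖ₑ ^ r

theorem powerSum_mono (r : ℝ) (a : ℕ → E) : Monotone (powerSum r a) := fun _ _ h =>
  Finset.sum_le_sum_of_subset (Finset.range_mono h)

theorem powerSum_congr (h : ∀ i < n, ‖a i‖ = ‖b i‖) : powerSum r a n = powerSum r b n :=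
  Finset.sum_congr rfl fun i hi => by
    rw [← ofReal_norm, ← ofReal_norm, h i (Finset.mem_range.1 hi)]

theorem enorm_le_powerSum_rpow (hr : 0 < r) (a : ℕ → E) (hmn : m < n) :
    ‖a m‖ₑ ≤ powerSum r a n ^ (1 / r) := by
  rw [one_div, ENNReal.le_rpow_inv_iff hr]
  exact Finset.single_le_sum (f := fun i => ‖a i‖ₑ ^ r) (fun _ _ => zero_le)
    (Finset.mem_range.2 hmn)

theorem powerSum_rpow_ne_top (hr : 0 ≤ r) (a : ℕ → E) (n : ℕ) : powerSum r a n ^ (1 / r) ≠ ∞ :=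
  ENNReal.rpow_ne_top_of_nonneg (by positivity) <|
    ENNReal.sum_ne_top.2 fun _ _ => ENNReal.rpow_ne_top_of_nonneg hr enorm_ne_top

theorem measurable_powerSum [MeasurableSpace E] [BorelSpace E] (r : ℝ) (n : ℕ) :
    Measurable fun a : ℕ → E => powerSum r a n :=
  Finset.measurable_sum _ fun i _ => (measurable_pi_apply i).enorm.pow_const r

theorem partialSumVariation_le_mul_powerSum_rpow (hr : 0 < r) (ht : 1 ≤ t) (a : ℕ → E) (n : ℕ) :
    partialSumVariation t a n ≤ n * powerSum r a n ^ (1 / r) := by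
  simpa using (partialSumVariation_le_sum_enorm ht a n).trans <|
    Finset.sum_le_card_nsmul _ _ _ fun i hi => enorm_le_powerSum_rpow hr a (Finset.mem_range.1 hi)

theorem powerSum_gate_le (hr : 0 < r) {P : ℕ → (ℕ → E) → Prop} {c : ℝ≥0∞}
    (hP : ∀ i, P i a → powerSum r a (i + 1) ≤ c) (n : ℕ) : powerSum r (gate P a) n ≤ c := by
  have gate_le (n : ℕ) : powerSum r (gate P a) n ≤ powerSum r a n := by
    unfold powerSum gate
    gcongr with i
    split_ifs <;> simp
  induction n with
  | zero => simp [powerSum]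
  | succ n ih =>
    by_cases h : P n a
    · exact (gate_le (n + 1)).trans (hP n h)
    · simpa [powerSum, Finset.sum_range_succ, gate, h, hr, hr.le] using ih

theorem powerSum_gate_eq_zero (hr : 0 < r) {P : ℕ → (ℕ → E) → Prop} (hP : ∀ i < n, ¬P i a) :
    powerSum r (gate P a) n = 0 :=
  Finset.sum_eq_zero fun i hi => by
    simp [gate, hP i (Finset.mem_range.1 hi), ENNReal.zero_rpow_of_pos hr]

/-- The gate of the good-`λ` argument: it lets the `n`-th term pass once the variation of the
earlier partial sums exceeds `l` and as long as the power sum stays below `c`. -/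
def goodGate (r t : ℝ) (l c : ℝ≥0∞) (n : ℕ) (a : ℕ → E) : Prop :=
  l < partialSumVariation t a n ∧ powerSum r a (n + 1) ≤ c

theorem powerSum_goodGate_le (hr : 0 < r) (l c : ℝ≥0∞) (a : ℕ → E) (n : ℕ) :
    powerSum r (gate (goodGate r t l c) a) n
      ≤ Set.indicator {a : ℕ → E | l < partialSumVariation t a n} (fun _ => c) a := by
  by_cases h : l < partialSumVariation t a n
  · rw [Set.indicator_of_mem (Set.mem_ofPred_eq ▸ h)]
    exact powerSum_gate_le hr (fun _ hi => hi.2) n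
  · rw [powerSum_gate_eq_zero hr fun i hi hgate =>
      h (hgate.1.trans_le (partialSumVariation_mono t a hi.le))]
    exact zero_le

theorem lt_partialSumVariation_goodGate (hr : 0 < r) (ht : 1 ≤ t) {l c : ℝ≥0∞} (hcl : c ≤ l)
    (hS : powerSum r a n ^ (1 / r) ≤ c) (h : 3 * l < partialSumVariation t a n) :
    l < partialSumVariation t (gate (goodGate r t l (c ^ r)) a) n := by
  classical
  rw [one_div, ENNReal.rpow_inv_le_iff hr] at hS
  refine lt_partialSumVariation_of_three_mul_lt ht (fun i hi => ?_) (fun i hi => ?_) h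
  · exact if_congr (and_iff_left ((powerSum_mono r a hi).trans hS)) rfl rfl
  · refine (enorm_le_powerSum_rpow hr a hi).trans (le_trans ?_ hcl)
    rwa [one_div, ENNReal.rpow_inv_le_iff hr]

variable {X : Type*} [MeasurableSpace X] {μ : Measure X} [MeasurableSpace E] [BorelSpace E]
  [SecondCountableTopology E] {F : ℕ → X → E}

theorem IsConditionallySymmetric.gate_goodGate (hF : IsConditionallySymmetric F μ) (ht : 0 ≤ t)
    (r : ℝ) (l c : ℝ≥0∞) :
    IsConditionallySymmetric (fun n x => gate (goodGate r t l c) (fun i => F i x) n) μ := by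
  refine hF.gate_of_congr (fun n => ?_) fun n a b hab hn => ?_
  · exact (measurableSet_lt measurable_const (measurable_partialSumVariation ht n)).inter
      (measurableSet_le (measurable_powerSum r (n + 1)) measurable_const)
  · have norm_eq : ∀ i < n + 1, ‖a i‖ = ‖b i‖ := fun i hi =>
      (Nat.lt_succ_iff_lt_or_eq.1 hi).elim (fun h => congrArg norm (hab i h)) fun h => h ▸ hn
    rw [goodGate, goodGate, partialSumVariation_congr hab, powerSum_congr norm_eq]

variable [InnerProductSpace ℝ E]

theorem IsConditionallySymmetric.good_lambda {C : ℝ≥0} (hF : IsConditionallySymmetric F μ)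
    (hC : DyadicJumpSummable r t C) (hr : 0 < r) (ht : 1 ≤ t) (hl : 0 < l) {γ : ℝ} (hγ1 : γ ≤ 1)
    (n : ℕ) :
    μ {x | ENNReal.ofReal (3 * l) < partialSumVariation t (fun i => F i x) n}
      ≤ μ {x | ENNReal.ofReal (γ * l) < powerSum r (fun i => F i x) n ^ (1 / r)}
        + 4 * C * ENNReal.ofReal (4 * γ) ^ r
          * μ {x | ENNReal.ofReal l < partialSumVariation t (fun i => F i x) n} := by
  set c := ENNReal.ofReal (γ * l)
  set G : ℕ → X → E := fun n x =>
    gate (goodGate r t (ENNReal.ofReal l) (c ^ r)) (fun i => F i x) n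
  have hG : IsConditionallySymmetric G μ := hF.gate_goodGate (by linarith) r _ _
  have hV : Measurable fun x => partialSumVariation t (fun i => F i x) n :=
    (measurable_partialSumVariation (by linarith) n).comp hF.measurable_pi
  have cover : {x | ENNReal.ofReal (3 * l) < partialSumVariation t (fun i => F i x) n}
      ⊆ {x | c < powerSum r (fun i => F i x) n ^ (1 / r)}
        ∪ {x | ENNReal.ofReal l < partialSumVariation t (fun i => G i x) n} := by
    intro x hx
    refine or_iff_not_imp_left.2 fun hS => lt_partialSumVariation_goodGate hr ht ?_ (not_lt.1 hS) ?_
    · exact ENNReal.ofReal_le_ofReal (mul_le_of_le_one_left hl.le hγ1)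
    · rwa [← ENNReal.ofReal_ofNat 3, ← ENNReal.ofReal_mul (by norm_num)]
  refine (measure_mono cover).trans ((measure_union_le _ _).trans (add_le_add_right ?_ _))
  calc μ {x | ENNReal.ofReal l < partialSumVariation t (fun i => G i x) n}
    _ ≤ 4 * C * ENNReal.ofReal (4 / l) ^ r * ∫⁻ x, powerSum r (fun i => G i x) n ∂μ :=
      hG.meas_lt_partialSumVariation_le hC hr.le (by linarith) hl n
    _ ≤ 4 * C * ENNReal.ofReal (4 / l) ^ r * (c ^ r *
          μ {x | ENNReal.ofReal l < partialSumVariation t (fun i => F i x) n}) := by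
      rw [← lintegral_indicator_const (measurableSet_lt measurable_const hV)]
      gcongr with x
      exact powerSum_goodGate_le hr _ _ _ n
    _ = _ := by
      have : ENNReal.ofReal (4 / l) * c = ENNReal.ofReal (4 * γ) := by
        rw [← ENNReal.ofReal_mul (by positivity)]
        congr 1
        field_simp
      rw [← this, ENNReal.mul_rpow_of_nonneg _ _ hr.le]
      ring

theorem exists_mul_ofReal_mul_rpow_le (hr : 0 < r) (c : ℝ) {A B ε : ℝ≥0∞} (hA : A ≠ ∞)
    (hB : B ≠ ∞) (hε : 0 < ε) :
    ∃ γ : ℝ, 0 < γ ∧ γ ≤ 1 ∧ A * (B * ENNReal.ofReal (c * γ) ^ r) ≤ ε := by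
  have continuous_bound : Continuous fun γ : ℝ => A * (B * ENNReal.ofReal (c * γ) ^ r) :=
    (ENNReal.continuous_const_mul hA).comp ((ENNReal.continuous_const_mul hB).comp
      (ENNReal.continuous_rpow_const.comp (ENNReal.continuous_ofReal.comp (by fun_prop))))
  have at_zero : A * (B * ENNReal.ofReal (c * 0) ^ r) < ε := by simpa [hr] using hε
  have small := (continuous_bound.tendsto 0).eventually_le_const at_zero
  obtain ⟨γ, hγε, hγ, hγ1⟩ :=
    ((small.filter_mono nhdsWithin_le_nhds).and (Ioc_mem_nhdsGT one_pos)).exists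
  exact ⟨γ, hγ, hγ1, hγε⟩

theorem exists_lintegral_partialSumVariation_rpow_le (μ : Measure X) (E : Type*)
    [NormedAddCommGroup E] [MeasurableSpace E] [BorelSpace E] [SecondCountableTopology E]
    [InnerProductSpace ℝ E] {C : ℝ≥0} (hC : DyadicJumpSummable r t C) (hr : 0 < r) (ht : 1 ≤ t)
    {p : ℝ} (hp : 0 < p) :
    ∃ D : ℝ≥0, 0 < D ∧ ∀ F : ℕ → X → E, IsConditionallySymmetric F μ → ∀ n,
      ∫⁻ x, partialSumVariation t (fun i => F i x) n ^ p ∂μ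
        ≤ D * ∫⁻ x, (powerSum r (fun i => F i x) n ^ (1 / r)) ^ p ∂μ := by
  obtain ⟨γ, hγ, hγ1, hε⟩ := exists_mul_ofReal_mul_rpow_le (A := ENNReal.ofReal (3 ^ p))
    (B := 4 * C) (ε := 2⁻¹) hr 4 ofReal_ne_top (by finiteness) (by simp)
  refine ⟨2 * Real.toNNReal ((3 / γ) ^ p), by positivity, fun F hF n => ?_⟩
  set V : X → ℝ≥0∞ := fun x => partialSumVariation t (fun i => F i x) n
  set S : X → ℝ≥0∞ := fun x => powerSum r (fun i => F i x) n ^ (1 / r)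
  have hV : Measurable V := (measurable_partialSumVariation (by linarith) n).comp hF.measurable_pi
  have hS : Measurable S := ((measurable_powerSum r n).comp hF.measurable_pi).pow_const _
  have hVS (x : X) : V x ≤ n * S x := partialSumVariation_le_mul_powerSum_rpow hr ht _ n
  have hS_top (x : X) : S x ≠ ∞ := powerSum_rpow_ne_top hr.le _ n
  have hV_top (x : X) : V x ≠ ∞ :=
    ne_top_of_le_ne_top (ENNReal.mul_ne_top (natCast_ne_top n) (hS_top x)) (hVS x)
  by_cases hfin : ∫⁻ x, S x ^ p ∂μ = ∞
  · rw [hfin, ENNReal.mul_top (by positivity)]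
    exact le_top
  have hV_fin : ∫⁻ x, V x ^ p ∂μ ≠ ∞ := by
    have hn : (n : ℝ≥0∞) ^ p ≠ ∞ := ENNReal.rpow_ne_top_of_nonneg hp.le (natCast_ne_top n)
    refine ne_top_of_le_ne_top (ENNReal.mul_ne_top hn hfin) ?_
    rw [← lintegral_const_mul' _ _ hn]
    refine lintegral_mono fun x => ?_
    rw [← ENNReal.mul_rpow_of_nonneg _ _ hp.le]
    exact ENNReal.rpow_le_rpow (hVS x) hp.le
  exact_mod_cast lintegral_rpow_le_of_good_lambda hV hS hV_top hS_top hp three_pos hγ hε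
    (fun l hl => hF.good_lambda hC hr ht hl hγ1 n) hV_fin

end GoodLambda

section JumpInequality

variable {X : Type*} [MeasurableSpace X]

theorem exists_partialSumVariation_rpow_le_of_isConditionallySymmetric (μ : Measure X) (E : Type*)
    [NormedAddCommGroup E] [MeasurableSpace E] [BorelSpace E] [SecondCountableTopology E]
    [InnerProductSpace ℝ E] {p r t : ℝ} (hp : 0 < p) (hr1 : 1 ≤ r) (hr2 : r ≤ 2) (hrt : r ≤ t)
    (hcase : r < 2 ∨ r < t) :
    ∃ D : ℝ≥0, 0 < D ∧ ∀ F : ℕ → X → E, IsConditionallySymmetric F μ → ∀ n,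
      ∫⁻ x, partialSumVariation t (fun i => F i x) n ^ p ∂μ
        ≤ D * ∫⁻ x, (powerSum r (fun i => F i x) n ^ (1 / r)) ^ p ∂μ := by
  have of_summable {C : ℝ≥0} (hC : DyadicJumpSummable r t C) :=
    exists_lintegral_partialSumVariation_rpow_le μ E hC (by linarith) (by linarith) hp
  rcases hrt.lt_or_eq with hlt | rfl
  · exact (exists_dyadicJumpSummable_of_lt hr1 hr2 hlt).elim fun _ => of_summable
  rcases hr1.lt_or_eq with hr | rfl
  · exact (exists_dyadicJumpSummable_self hr (hcase.resolve_right (lt_irrefl _))).elim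
      fun _ => of_summable
  · refine ⟨1, one_pos, fun F _ n => ?_⟩
    rw [ENNReal.coe_one, one_mul]
    gcongr with x
    simpa [powerSum] using partialSumVariation_le_sum_enorm le_rfl (fun i => F i x) n

end JumpInequality

section DyadicSwap

theorem measurePreserving_ite_add_sub {G : Type*} [AddGroup G] [MeasurableSpace G]
    [MeasurableAdd G] (μ : Measure G) [μ.IsAddRightInvariant] {P : G → Prop} [DecidablePred P]
    (hP : MeasurableSet {x | P x}) {h : G} (hPh : ∀ x, P (x + h) ↔ ¬P x) :
    MeasurePreserving (fun x => if P x then x + h else x - h) μ μ := by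
  set σ : G → G := fun x => if P x then x + h else x - h
  have hσ : Measurable σ := by
    simp only [σ, sub_eq_add_neg]
    exact (measurable_add_const h).ite hP (measurable_add_const (-h))
  refine ⟨hσ, Measure.ext fun s hs => ?_⟩
  have on_P : σ ⁻¹' s ∩ {x | P x} = (· + h) ⁻¹' (s \ {x | P x}) := by
    ext x
    by_cases hx : P x <;> simp [σ, hx, hPh]
  have off_P : σ ⁻¹' s \ {x | P x} = (· + -h) ⁻¹' (s ∩ {x | P x}) := by
    ext x
    have hx' : P (x + -h) ↔ ¬P x := by simpa using (not_congr (hPh (x + -h))).symm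
    by_cases hx : P x <;> simp [σ, hx, hx', sub_eq_add_neg]
  rw [Measure.map_apply hσ hs, ← measure_inter_add_sdiff _ hP, on_P, off_P,
    measure_preimage_add_right, measure_preimage_add_right, add_comm, measure_inter_add_sdiff _ hP]

/-- The integer `m` for which `x` lies in the dyadic interval `[m 2^(-i), (m+1) 2^(-i))`. -/
def dyadicIndex (i : ℤ) (x : ℝ) : ℤ := ⌊x * 2 ^ i⌋

theorem mem_dyadicInterval_iff {i m : ℤ} {x : ℝ} :
    x ∈ dyadicInterval i m ↔ dyadicIndex i x = m := by
  have : (0 : ℝ) < 2 ^ i := by positivity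
  rw [dyadicInterval, dyadicIndex, Set.mem_Ico, Int.floor_eq_iff, zpow_neg, ← div_eq_mul_inv,
    ← div_eq_mul_inv, div_le_iff₀ this, lt_div_iff₀ this]

theorem measureReal_dyadicInterval (i m : ℤ) : volume.real (dyadicInterval i m) = 2 ^ (-i) := by
  have : (0 : ℝ) ≤ 2 ^ (-i) := by positivity
  simp only [dyadicInterval, measureReal_def, Real.volume_Ico, ← sub_mul, add_sub_cancel_left,
    one_mul, toReal_ofReal this]

theorem measurable_dyadicIndex (i : ℤ) : Measurable (dyadicIndex i) :=
  (measurable_id.mul_const _).floor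

theorem dyadicIndex_sub_natCast (i : ℤ) (k : ℕ) (x : ℝ) :
    dyadicIndex (i - k) x = dyadicIndex i x / 2 ^ k := by
  rw [dyadicIndex, dyadicIndex, zpow_sub₀ two_ne_zero, ← mul_div_assoc, zpow_natCast]
  exact_mod_cast Int.floor_div_natCast (x * 2 ^ i) (2 ^ k)

theorem dyadicIndex_sub_one (i : ℤ) (x : ℝ) : dyadicIndex (i - 1) x = dyadicIndex i x / 2 := by
  simpa using dyadicIndex_sub_natCast i 1 x

theorem dyadicIndex_eq_of_le {i j : ℤ} (hij : i ≤ j) {x y : ℝ}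
    (h : dyadicIndex j x = dyadicIndex j y) : dyadicIndex i x = dyadicIndex i y := by
  obtain ⟨k, rfl⟩ : ∃ k : ℕ, i = j - k := ⟨(j - i).toNat, by omega⟩
  rw [dyadicIndex_sub_natCast, dyadicIndex_sub_natCast, h]

/-- The map exchanging by translation the two halves, of length `2^(-i)`, of every dyadic
interval of length `2^(1-i)`. -/
def dyadicSwap (i : ℤ) (x : ℝ) : ℝ :=
  if Even (dyadicIndex i x) then x + 2 ^ (-i) else x - 2 ^ (-i)

theorem dyadicIndex_add (i : ℤ) (x : ℝ) :
    dyadicIndex i (x + 2 ^ (-i)) = dyadicIndex i x + 1 := by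
  rw [dyadicIndex, add_mul, ← zpow_add₀ two_ne_zero, neg_add_cancel, zpow_zero, Int.floor_add_one,
    dyadicIndex]

theorem dyadicIndex_sub (i : ℤ) (x : ℝ) :
    dyadicIndex i (x - 2 ^ (-i)) = dyadicIndex i x - 1 := by
  rw [dyadicIndex, sub_mul, ← zpow_add₀ two_ne_zero, neg_add_cancel, zpow_zero, Int.floor_sub_one,
    dyadicIndex]

theorem dyadicIndex_dyadicSwap (i : ℤ) (x : ℝ) :
    dyadicIndex i (dyadicSwap i x)
      = if Even (dyadicIndex i x) then dyadicIndex i x + 1 else dyadicIndex i x - 1 := by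
  rw [dyadicSwap, apply_ite (dyadicIndex i), dyadicIndex_add, dyadicIndex_sub]

theorem dyadicIndex_dyadicSwap_of_lt {i j : ℤ} (hij : i < j) (x : ℝ) :
    dyadicIndex i (dyadicSwap j x) = dyadicIndex i x := by
  have parent : dyadicIndex (j - 1) (dyadicSwap j x) = dyadicIndex (j - 1) x := by
    rw [dyadicIndex_sub_one, dyadicIndex_sub_one, dyadicIndex_dyadicSwap]
    split_ifs with h <;> rw [Int.even_iff] at h <;> omega
  exact dyadicIndex_eq_of_le (by omega) parent

theorem measurePreserving_dyadicSwap (i : ℤ) : MeasurePreserving (dyadicSwap i) :=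
  measurePreserving_ite_add_sub volume (P := fun x => Even (dyadicIndex i x))
    (measurable_dyadicIndex i (MeasurableSet.of_discrete (s := {m | Even m})))
    fun x => by rw [dyadicIndex_add, Int.even_add_one]

end DyadicSwap

namespace IsDiscLPFamily

variable {f : ℤ → ℝ → ℝ}

theorem eq_of_dyadicIndex_eq (hf : IsDiscLPFamily f) {i : ℤ} {x y : ℝ}
    (h : dyadicIndex i x = dyadicIndex i y) : f i x = f i y :=
  hf.2.1 i _ x (mem_dyadicInterval_iff.2 h) y (mem_dyadicInterval_iff.2 rfl)

theorem measurable (hf : IsDiscLPFamily f) (i : ℤ) : Measurable (f i) := by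
  have factors : (f i).FactorsThrough (dyadicIndex i) := fun _ _ => hf.eq_of_dyadicIndex_eq
  rw [← factors.extend_comp fun _ => 0]
  exact Measurable.of_discrete.comp (measurable_dyadicIndex i)

theorem add_comp_dyadicSwap_eq (hf : IsDiscLPFamily f) {i : ℤ} {x y : ℝ}
    (h : dyadicIndex (i - 1) x = dyadicIndex (i - 1) y) :
    f i x + f i (dyadicSwap i x) = f i y + f i (dyadicSwap i y) := by
  rw [dyadicIndex_sub_one, dyadicIndex_sub_one] at h
  by_cases hxy : dyadicIndex i x = dyadicIndex i y
  · rw [hf.eq_of_dyadicIndex_eq hxy, hf.eq_of_dyadicIndex_eq (x := dyadicSwap i x)]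
    rw [dyadicIndex_dyadicSwap, dyadicIndex_dyadicSwap, hxy]
  · rw [add_comm (f i y)]
    congr 1 <;> refine hf.eq_of_dyadicIndex_eq ?_ <;> rw [dyadicIndex_dyadicSwap] <;>
      split_ifs with hparity <;> rw [Int.even_iff] at hparity <;> omega

theorem apply_dyadicSwap (hf : IsDiscLPFamily f) (i : ℤ) (x : ℝ) :
    f i (dyadicSwap i x) = -f i x := by
  set m := dyadicIndex (i - 1) x
  set I := dyadicInterval (i - 1) m
  have measurableSet_I : MeasurableSet I := measurableSet_Ico
  have invariant : dyadicSwap i ⁻¹' I = I := by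
    ext y
    simp only [Set.mem_preimage, I, mem_dyadicInterval_iff,
      dyadicIndex_dyadicSwap_of_lt (sub_one_lt i)]
  have swap_I : MeasurePreserving (dyadicSwap i) (volume.restrict I) (volume.restrict I) := by
    have := (measurePreserving_dyadicSwap i).restrict_preimage measurableSet_I
    rwa [invariant] at this
  have integrable_f : Integrable (f i) (volume.restrict I) :=
    ((hf.1 i).integrableOn_isCompact isCompact_Icc).mono_set Set.Ico_subset_Icc_self
  have integrable_swap : Integrable (fun y => f i (dyadicSwap i y)) (volume.restrict I) :=
    swap_I.integrable_comp_of_integrable integrable_f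
  have integral_f : ∫ y in I, f i y = 0 := hf.2.2 i m
  have integral_swap : ∫ y in I, f i (dyadicSwap i y) = 0 := by
    rw [← integral_map swap_I.aemeasurable (hf.measurable i).aestronglyMeasurable, swap_I.map_eq,
      integral_f]
  have sum_const : ∀ y ∈ I, f i y + f i (dyadicSwap i y) = f i x + f i (dyadicSwap i x) :=
    fun y hy => hf.add_comp_dyadicSwap_eq (mem_dyadicInterval_iff.1 hy)
  have integral_sum : volume.real I * (f i x + f i (dyadicSwap i x)) = 0 := by
    rw [← smul_eq_mul, ← setIntegral_const, ← setIntegral_congr_fun measurableSet_I sum_const,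
      integral_add integrable_f integrable_swap, integral_f, integral_swap, add_zero]
  have volume_pos : 0 < volume.real I := measureReal_dyadicInterval (i - 1) m ▸ by positivity
  linarith [(mul_eq_zero.1 integral_sum).resolve_left volume_pos.ne']

theorem isConditionallySymmetric (hf : IsDiscLPFamily f) (j : ℤ) :
    IsConditionallySymmetric (fun n : ℕ => f (n + j)) volume where
  measurable n := hf.measurable _
  exists_flip n := ⟨dyadicSwap (n + j), measurePreserving_dyadicSwap _,
    fun _ hi x => hf.eq_of_dyadicIndex_eq (dyadicIndex_dyadicSwap_of_lt (by omega) x),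
    hf.apply_dyadicSwap _⟩

end IsDiscLPFamily

section JumpVariation

variable {E : Type*} [NormedAddCommGroup E] {t : ℝ}

/-- The `t`-variation of the formal partial sums of a two-sided series `∑ a i`: the supremum of
`(∑ₖ ‖∑_{N k < i ≤ N (k + 1)} a i‖ ^ t) ^ (1 / t)` over nondecreasing sequences `N` of integers. -/
def jumpVariation (t : ℝ) (a : ℤ → E) : ℝ≥0∞ :=
  ⨆ N : {N : ℕ → ℤ // Monotone N},
    (∑' k, ‖∑ i ∈ Finset.Ioc (N.1 k) (N.1 (k + 1)), a i‖ₑ ^ t) ^ (1 / t)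

theorem le_jumpVariation (t : ℝ) (a : ℤ → E) {N : ℕ → ℤ} (hN : Monotone N) :
    (∑' k, ‖∑ i ∈ Finset.Ioc (N k) (N (k + 1)), a i‖ₑ ^ t) ^ (1 / t) ≤ jumpVariation t a :=
  le_iSup_of_le ⟨N, hN⟩ le_rfl

theorem sum_Ioc_eq_sum_range_sub (a : ℤ → E) (L : ℤ) {m n : ℕ} (hmn : m ≤ n) :
    ∑ i ∈ Finset.Ioc (m - L) (n - L), a i
      = ∑ i ∈ Finset.range n, a (i + (1 - L)) - ∑ i ∈ Finset.range m, a (i + (1 - L)) := by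
  rw [← Finset.sum_Ico_eq_sub (fun i : ℕ => a (i + (1 - L))) hmn]
  refine (Finset.sum_nbij' (fun i : ℕ => (i + (1 - L) : ℤ)) (fun i => (i - (1 - L)).toNat)
    ?_ ?_ ?_ ?_ fun _ _ => rfl).symm <;>
    simp only [Finset.mem_Ico, Finset.mem_Ioc] <;> omega

theorem jumps_le_partialSumVariation (t : ℝ) (a : ℤ → E) {N : ℕ → ℤ} (hN : Monotone N) {L : ℕ}
    (lower : ∀ k, -(L : ℤ) ≤ N k) (upper : ∀ k, N k ≤ L) :
    (∑' k, ‖∑ i ∈ Finset.Ioc (N k) (N (k + 1)), a i‖ₑ ^ t) ^ (1 / t)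
      ≤ partialSumVariation t (fun n : ℕ => a (n + (1 - L))) (2 * L) := by
  obtain ⟨m, hm⟩ : ∃ m : ℕ → ℕ, ∀ k, N k = m k - L :=
    ⟨fun k => (N k + L).toNat, fun k => by grind⟩
  have hm_mono : Monotone m := fun i j hij => by have := hN hij; have := hm i; have := hm j; omega
  have hm_le (k : ℕ) : m k ∈ Set.Iic (2 * L) := by
    have := upper k; have := hm k; rw [Set.mem_Iic]; omega
  refine le_trans (le_of_eq ?_) (le_powVariationOn t _ hm_mono hm_le)
  simp only [hm, sum_Ioc_eq_sum_range_sub a L (hm_mono (Nat.le_succ _)), edist_eq_enorm_sub]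

theorem jumpVariation_le_liminf_partialSumVariation (ht : 0 ≤ t) (a : ℤ → E) :
    jumpVariation t a ≤ Filter.liminf
      (fun L : ℕ => partialSumVariation t (fun n : ℕ => a (n + (1 - L))) (2 * L))
      Filter.atTop := by
  refine iSup_le fun ⟨N, hN⟩ => ?_
  set u : ℕ → ℝ≥0∞ := fun k => ‖∑ i ∈ Finset.Ioc (N k) (N (k + 1)), a i‖ₑ ^ t
  refine le_of_tendsto' ((ENNReal.continuous_rpow_const.tendsto _).comp
    (ENNReal.tendsto_nat_tsum u)) fun M => Filter.le_liminf_of_le (by isBoundedDefault) ?_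
  filter_upwards [Filter.eventually_ge_atTop (max (N 0).natAbs (N M).natAbs)] with L hL
  have stopped_mono : Monotone fun k => N (min k M) := hN.comp (monotone_id.min monotone_const)
  refine le_trans ?_ (jumps_le_partialSumVariation t a stopped_mono
    (fun k => ?_) fun k => ?_)
  · refine ENNReal.rpow_le_rpow ((Finset.sum_congr rfl fun k hk => ?_).trans_le
      (ENNReal.sum_le_tsum (Finset.range M))) (by positivity)
    rw [Finset.mem_range] at hk
    rw [min_eq_left hk.le, min_eq_left (Nat.succ_le_of_lt hk)]
  · have := hN (Nat.zero_le (min k M)); omega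
  · have := hN (Nat.min_le_right k M); omega

theorem powerSum_le_tsum_int (r : ℝ) (a : ℤ → E) (j : ℤ) (n : ℕ) :
    powerSum r (fun k : ℕ => a (k + j)) n ≤ ∑' i : ℤ, ‖a i‖ₑ ^ r :=
  (ENNReal.sum_le_tsum _).trans <| ENNReal.tsum_comp_le_tsum_of_injective
    (f := fun k : ℕ => (k + j : ℤ)) (fun _ _ h => by simpa using h) fun i => ‖a i‖ₑ ^ r

theorem lintegral_jumpVariation_rpow_le {X : Type*} [MeasurableSpace X] {μ : Measure X}
    [MeasurableSpace E] [BorelSpace E] [SecondCountableTopology E] {f : ℤ → X → E} {p r : ℝ}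
    (hf : ∀ i, Measurable (f i)) (hp : 0 < p) (hr : 0 ≤ r) (ht : 0 ≤ t) {D : ℝ≥0∞}
    (hD : ∀ (j : ℤ) (n : ℕ),
      ∫⁻ x, partialSumVariation t (fun i : ℕ => f (i + j) x) n ^ p ∂μ
        ≤ D * ∫⁻ x, (powerSum r (fun i : ℕ => f (i + j) x) n ^ (1 / r)) ^ p ∂μ) :
    ∫⁻ x, jumpVariation t (fun i => f i x) ^ p ∂μ
      ≤ D * ∫⁻ x, ((∑' i, ‖f i x‖ₑ ^ r) ^ (1 / r)) ^ p ∂μ := by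
  set V : ℕ → X → ℝ≥0∞ := fun L x =>
    partialSumVariation t (fun n : ℕ => f (n + (1 - L)) x) (2 * L)
  have hV (L : ℕ) : Measurable fun x => V L x ^ p :=
    ((measurable_partialSumVariation ht _).comp
      (measurable_pi_lambda _ fun n : ℕ => hf (n + (1 - L)))).pow_const p
  calc ∫⁻ x, jumpVariation t (fun i => f i x) ^ p ∂μ
    _ ≤ ∫⁻ x, Filter.liminf (fun L => V L x ^ p) Filter.atTop ∂μ :=
      lintegral_mono fun x => (ENNReal.rpow_le_rpow
        (jumpVariation_le_liminf_partialSumVariation ht _) hp.le).trans_eq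
          (ENNReal.orderIsoRpow p hp).liminf_apply
    _ ≤ Filter.liminf (fun L => ∫⁻ x, V L x ^ p ∂μ) Filter.atTop := lintegral_liminf_le hV
    _ ≤ D * ∫⁻ x, ((∑' i, ‖f i x‖ₑ ^ r) ^ (1 / r)) ^ p ∂μ := by
      refine Filter.liminf_le_of_le (by isBoundedDefault) fun b hb => ?_
      obtain ⟨L, hL⟩ := hb.exists
      refine hL.trans ((hD (1 - L) (2 * L)).trans ?_)
      gcongr with x
      exact powerSum_le_tsum_int r (fun i => f i x) _ _

end JumpVariation

theorem discrete_lepingle_pisier_xu_general {p r t : ℝ} (hp : 0 < p) (hr1 : 1 ≤ r) (hr2 : r ≤ 2)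
    (hrt : r ≤ t) (hcase : r < 2 ∨ r < t) :
    ∃ C : ℝ≥0, 0 < C ∧ ∀ f : ℤ → ℝ → ℝ, IsDiscLPFamily f →
      (∫⁻ x : ℝ, jumpVariation t (fun i => f i x) ^ p) ^ (1 / p)
        ≤ C * (∫⁻ x : ℝ, ((∑' i, ‖f i x‖ₑ ^ r) ^ (1 / r)) ^ p) ^ (1 / p) := by
  obtain ⟨D, hD_pos, hD⟩ := exists_partialSumVariation_rpow_le_of_isConditionallySymmetric
    (volume : Measure ℝ) ℝ hp hr1 hr2 hrt hcase
  refine ⟨D ^ (1 / p), NNReal.rpow_pos hD_pos, fun f hf => ?_⟩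
  rw [ENNReal.coe_rpow_of_nonneg _ (by positivity),
    ← ENNReal.mul_rpow_of_nonneg _ _ (by positivity)]
  refine ENNReal.rpow_le_rpow ?_ (by positivity)
  exact lintegral_jumpVariation_rpow_le hf.measurable hp (by linarith) (by linarith)
    fun j => hD _ (hf.isConditionallySymmetric j)

/-- Lépingle's inequality (`t > r`) and Pisier–Xu's inequality (`t = r < 2`),
discrete case. -/
theorem discrete_lepingle_pisier_xu
    (p r t : ℝ) (hp : 1 < p) (hr1 : 1 ≤ r) (hr2 : r ≤ 2)
    (hrt : r ≤ t) (hcase : r < 2 ∨ r < t) :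
    ∃ C : ℝ≥0, 0 < C ∧
      ∀ (f : ℤ → ℝ → ℝ), IsDiscLPFamily f →
      ∀ (Nk : ℕ → ℝ → ℤ), IsJumpCollection Nk →
      (∫⁻ x : ℝ,
          ((∑' k : ℕ, (ENNReal.ofReal
              |∑ i ∈ Finset.Ioc (Nk k x) (Nk (k + 1) x), f i x|) ^ t) ^ (1 / t)) ^ p) ^ (1 / p)
        ≤ (C : ℝ≥0∞) *
      (∫⁻ x : ℝ,
          ((∑' i : ℤ, (ENNReal.ofReal |f i x|) ^ r) ^ (1 / r)) ^ p) ^ (1 / p) := by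
  obtain ⟨C, hC, bound⟩ :=
    discrete_lepingle_pisier_xu_general (zero_lt_one.trans hp) hr1 hr2 hrt hcase
  simp only [← Real.enorm_eq_ofReal_abs]
  refine ⟨C, hC, fun f hf Nk hN => le_trans ?_ (bound f hf)⟩
  gcongr with x
  exact le_jumpVariation t (fun i => f i x) (monotone_nat_of_le_succ (hN.2 · x))

end
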